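/- For every sign string S = (s_1,…,s_n), the complex dimension of the space of invariants Inv(W^S) = {x ∈ W^S : X·x = 0 for all X ∈ 𝔰𝔩₃(ℂ)} equals the number of dominant state strings for S. -/

import Mathlib

/-!
A dominant path is read from its first step, whereas induction on `S` peels off the first tensor
factor, so the suffix of a path has to be matched with the remaining tensor product. This is why
lowest weight vectors are counted: after twisting by the Chevalley involution, so that `E₂₁` and
`E₃₂` become the raising operators, the highest weight vectors of weight `p` in `W^S` should be as
many as the paths with sign string `S` that start at `p`, stay dominant and end at the origin.

A highest weight vector of `W^s ⊗ V` is determined by its component `m` along the highest weight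
vector of `W^s`. Up to exchanging the two simple roots, `m` is any vector of weight `(a - 1, b)`
with `e₂ m = 0`, `e₁² m = 0` and `e₂ e₁ m` a highest weight vector. For `a, b ≥ 0` the map `e₁`,
and then `e₂` on its image, splits the space of these `m` into the highest weight spaces of weights
`(a - 1, b)`, `(a + 1, b - 1)` and `(a, b + 1)`; explicit lowering operators, rather than complete
reducibility, show that the images are as large as possible. By `𝔰𝔩₂`-theory there are no highest
weight vectors of non-dominant weight, and those of weight `0` are exactly the invariants. Both
counts therefore satisfy the same recursion.
-/

noncomputable section

/-- The ground field `K = ℚ(v)`. -/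
abbrev K : Type := RatFunc ℚ

/-- The indeterminate `v`. -/
def v : K := RatFunc.X

/-- The three states `-1, 0, 1`. -/
inductive St where
  | neg : St
  | zero : St
  | pos : St
deriving DecidableEq

instance : Fintype St where
  elems := {St.neg, St.zero, St.pos}
  complete := fun x => by cases x <;> simp

/-- The integer value of a state. -/
def stval : St → ℤ
  | .neg => -1
  | .zero => 0
  | .pos => 1

/-- The order `-1 < 0 < 1` on states. -/
def stLt (a b : St) : Prop := stval a < stval b

/-- The weight `μ(s, j) ∈ ℤ²`; `true` is the sign `+`, `false` is `-`. -/
def wt : Bool → St → ℤ × ℤ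
  | true, .pos => (1, 0)
  | true, .zero => (-1, 1)
  | true, .neg => (0, -1)
  | false, .pos => (0, 1)
  | false, .zero => (1, -1)
  | false, .neg => (-1, 0)

/-- Total weight `Σ μ(s_k, j_k)` of a sign string and a state string. -/
def wtSum (S : List Bool) (J : List St) : ℤ × ℤ :=
  ((S.zip J).map fun p => wt p.1 p.2).sum

/-- A state string is dominant if its lattice path stays in the dominant
Weyl chamber and returns to the origin. -/
def Dominant (S : List Bool) (J : List St) : Prop :=
  J.length = S.length ∧
  (∀ k : ℕ, 0 ≤ (wtSum (S.take k) (J.take k)).1 ∧ 0 ≤ (wtSum (S.take k) (J.take k)).2) ∧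
  wtSum S J = 0

/-- Coefficients of `b^{+-}(1) ∈ V⁺ ⊗ V⁻`. -/
def bCpm : St → St → K
  | .pos, .neg => 1
  | .zero, .zero => v⁻¹
  | .neg, .pos => v⁻¹ ^ 2
  | _, _ => 0

/-- Coefficients of `b^{-+}(1) ∈ V⁻ ⊗ V⁺`. -/
def bCmp : St → St → K
  | .pos, .neg => 1
  | .zero, .zero => v⁻¹
  | .neg, .pos => v⁻¹ ^ 2
  | _, _ => 0

/-- Matrix entries of `σ_{+-} : V⁺ ⊗ V⁻ → K`. -/
def sCpm : St → St → K
  | .neg, .pos => 1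
  | .zero, .zero => v
  | .pos, .neg => v ^ 2
  | _, _ => 0

/-- Matrix entries of `σ_{-+} : V⁻ ⊗ V⁺ → K`. -/
def sCmp : St → St → K
  | .neg, .pos => 1
  | .zero, .zero => v
  | .pos, .neg => v ^ 2
  | _, _ => 0

/-- `tYpp a b c` is the coefficient of `e_a ⊗ e_b` in `t^{++}_-(e_c)`. -/
def tYpp : St → St → St → K
  | .pos, .zero, .pos => 1
  | .zero, .pos, .pos => v⁻¹
  | .pos, .neg, .zero => 1
  | .neg, .pos, .zero => v⁻¹
  | .zero, .neg, .neg => 1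
  | .neg, .zero, .neg => v⁻¹
  | _, _, _ => 0

/-- `tYmm a b c` is the coefficient of `e_a ⊗ e_b` in `t^{--}_+(e_c)`. -/
def tYmm : St → St → St → K
  | .pos, .zero, .pos => 1
  | .zero, .pos, .pos => v⁻¹
  | .pos, .neg, .zero => 1
  | .neg, .pos, .zero => v⁻¹
  | .zero, .neg, .neg => 1
  | .neg, .zero, .neg => v⁻¹
  | _, _, _ => 0

/-- `tLpp a b c` is the coefficient of `e_c` in `t^-_{++}(e_a ⊗ e_b)`. -/
def tLpp : St → St → St → K
  | .pos, .zero, .pos => v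
  | .zero, .pos, .pos => 1
  | .pos, .neg, .zero => v
  | .neg, .pos, .zero => 1
  | .zero, .neg, .neg => v
  | .neg, .zero, .neg => 1
  | _, _, _ => 0

/-- `tLmm a b c` is the coefficient of `e_c` in `t^+_{--}(e_a ⊗ e_b)`. -/
def tLmm : St → St → St → K
  | .pos, .zero, .pos => v
  | .zero, .pos, .pos => 1
  | .pos, .neg, .zero => v
  | .neg, .pos, .zero => 1
  | .zero, .neg, .neg => v
  | .neg, .zero, .neg => 1
  | _, _, _ => 0

/-- Matrix entries of the H-map
`(id_{V⁺} ⊗ t^-_{++}) ∘ (t^{++}_- ⊗ id_{V⁺}) : V⁻ ⊗ V⁺ → V⁺ ⊗ V⁻`: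
`HCpm a b c d` is the coefficient of `e_a ⊗ e_b` in the image of `e_c ⊗ e_d`. -/
def HCpm (a b c d : St) : K := ∑ y : St, tYpp a y c * tLpp y d b

/-- Matrix entries of the H-map
`(t^-_{++} ⊗ id_{V⁺}) ∘ (id_{V⁺} ⊗ t^{++}_-) : V⁺ ⊗ V⁻ → V⁻ ⊗ V⁺`:
`HCmp a b c d` is the coefficient of `e_a ⊗ e_b` in the image of `e_c ⊗ e_d`. -/
def HCmp (a b c d : St) : K := ∑ x : St, tLpp c x a * tYpp x b d

/-- State patterns of the three H-rules: `(j_k, j_{k+1})` on top, the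
replacement below. -/
inductive HPat : St → St → St → St → Prop where
  | h1 : HPat .pos .zero .zero .pos
  | h2 : HPat .zero .zero .neg .pos
  | h3 : HPat .zero .neg .neg .zero

/-- State patterns of the three Y-rules. -/
inductive YPat : St → St → St → Prop where
  | y1 : YPat .pos .zero .pos
  | y2 : YPat .pos .neg .zero
  | y3 : YPat .zero .neg .neg

/-- One application of a growth rule, rewriting `(S, J)` to `(S', J')`. -/
inductive Step : List Bool → List St → List Bool → List St → Prop where
  | hstep (A B : List Bool) (P Q : List St) (s1 s2 : Bool) (j1 j2 j1' j2' : St)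
      (hl : A.length = P.length) (hs : s1 ≠ s2) (hp : HPat j1 j2 j1' j2') :
      Step (A ++ s1 :: s2 :: B) (P ++ j1 :: j2 :: Q)
        (A ++ (!s1) :: (!s2) :: B) (P ++ j1' :: j2' :: Q)
  | ustep (A B : List Bool) (P Q : List St) (s1 s2 : Bool)
      (hl : A.length = P.length) (hs : s1 ≠ s2) :
      Step (A ++ s1 :: s2 :: B) (P ++ St.pos :: St.neg :: Q) (A ++ B) (P ++ Q)
  | ystep (A B : List Bool) (P Q : List St) (s : Bool) (j1 j2 j' : St)
      (hl : A.length = P.length) (hp : YPat j1 j2 j') :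
      Step (A ++ s :: s :: B) (P ++ j1 :: j2 :: Q) (A ++ (!s) :: B) (P ++ j' :: Q)

/-- A complete execution of the growth algorithm from `(S, J)` down to the
pair of empty strings. -/
inductive Exec : List Bool → List St → Type where
  | nil : Exec [] []
  | hstep (A B : List Bool) (P Q : List St) (s1 s2 : Bool) (j1 j2 j1' j2' : St)
      (hl : A.length = P.length) (hs : s1 ≠ s2) (hp : HPat j1 j2 j1' j2')
      (e : Exec (A ++ (!s1) :: (!s2) :: B) (P ++ j1' :: j2' :: Q)) :
      Exec (A ++ s1 :: s2 :: B) (P ++ j1 :: j2 :: Q)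
  | ustep (A B : List Bool) (P Q : List St) (s1 s2 : Bool)
      (hl : A.length = P.length) (hs : s1 ≠ s2)
      (e : Exec (A ++ B) (P ++ Q)) :
      Exec (A ++ s1 :: s2 :: B) (P ++ St.pos :: St.neg :: Q)
  | ystep (A B : List Bool) (P Q : List St) (s : Bool) (j1 j2 j' : St)
      (hl : A.length = P.length) (hp : YPat j1 j2 j')
      (e : Exec (A ++ (!s) :: B) (P ++ j' :: Q)) :
      Exec (A ++ s :: s :: B) (P ++ j1 :: j2 :: Q)

/-- The web tensor of an execution, as coordinates with respect to the basis
`e^S_J` of `V^S`: `web e L` is the coefficient of `e^S_L`. -/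
def web : {S : List Bool} → {J : List St} → Exec S J → List St → K
  | _, _, .nil, L => if L = [] then 1 else 0
  | _, _, .hstep A _ _ _ s1 _ _ _ _ _ _ _ _ e, L =>
      match L.drop A.length with
      | a :: b :: R =>
          ∑ c : St, ∑ d : St,
            (if s1 then HCpm a b c d else HCmp a b c d) *
              web e (L.take A.length ++ c :: d :: R)
      | _ => 0
  | _, _, .ustep A _ _ _ s1 _ _ _ e, L =>
      match L.drop A.length with
      | a :: b :: R => (if s1 then bCpm a b else bCmp a b) * web e (L.take A.length ++ R)
      | _ => 0
  | _, _, .ystep A _ _ _ s _ _ _ _ _ e, L =>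
      match L.drop A.length with
      | a :: b :: R =>
          ∑ c : St, (if s then tYpp a b c else tYmm a b c) * web e (L.take A.length ++ c :: R)
      | _ => 0

/-- `c ∈ v⁻¹ ℤ[v⁻¹]`: a polynomial in `v⁻¹` with zero constant term. -/
def ZeroConst (c : K) : Prop :=
  ∃ p : Polynomial ℤ, p.coeff 0 = 0 ∧ c = Polynomial.aeval v⁻¹ p

/-- `x` has the negative-exponent property relative to a state string `J`
(`n` is the length of the ambient sign string). -/
def NegExpProp (n : ℕ) (x : List St → K) (J : List St) : Prop :=
  x J = 1 ∧ ∀ J' : List St, J'.length = n → J' ≠ J → ZeroConst (x J')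

/-- `c ∈ ℕ[v, v⁻¹]`: a Laurent polynomial with nonnegative integer
coefficients. -/
def IsNatLaurent (c : K) : Prop :=
  ∃ (p : Polynomial ℕ) (m : ℕ), c = v⁻¹ ^ m * Polynomial.aeval v p

/-- `c ∈ ℤ[v⁻¹]`. -/
def InZInv (c : K) : Prop := ∃ p : Polynomial ℤ, c = Polynomial.aeval v⁻¹ p

/-- Property P: all coefficients lie in `ℤ[v⁻¹]` and at most one of them has a
nonzero constant term. -/
def PropP (n : ℕ) (x : List St → K) : Prop :=
  (∀ J : List St, J.length = n → InZInv (x J)) ∧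
  ∀ J1 J2 : List St, J1.length = n → J2.length = n →
    ¬ ZeroConst (x J1) → ¬ ZeroConst (x J2) → J1 = J2

/-- The sign string `(+,+,−,−,+,+,−,−,+,+,−,−)`. -/
def base : List Bool :=
  [true, true, false, false, true, true, false, false, true, true, false, false]


open Matrix in
/-- The matrix acting on the `i`-th tensor factor: `X` on `W⁺ = ℂ³` and
`-Xᵀ` on the dual `W⁻`. -/
def coefM (S : List Bool) (X : Matrix (Fin 3) (Fin 3) ℂ) (i : Fin S.length) :
    Matrix (Fin 3) (Fin 3) ℂ :=
  if S.get i then X else -Xᵀ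

/-- The action of a matrix `X` on `W^S = W^{s₁} ⊗ ⋯ ⊗ W^{s_n}`, in
coordinates with respect to the standard tensor-product basis. -/
def actL (S : List Bool) (X : Matrix (Fin 3) (Fin 3) ℂ) :
    ((Fin S.length → Fin 3) → ℂ) →ₗ[ℂ] ((Fin S.length → Fin 3) → ℂ) where
  toFun x h := ∑ i : Fin S.length, ∑ b : Fin 3,
    coefM S X i (h i) b * x (Function.update h i b)
  map_add' x y := by
    funext h
    simp [mul_add, Finset.sum_add_distrib]
  map_smul' c x := by
    funext h
    simp only [Pi.smul_apply, smul_eq_mul, RingHom.id_apply, Finset.mul_sum]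
    exact Finset.sum_congr rfl fun i _ => Finset.sum_congr rfl fun b _ => by ring

/-- The space of `𝔰𝔩₃(ℂ)`-invariants in `W^S`. -/
def invSub (S : List Bool) : Submodule ℂ ((Fin S.length → Fin 3) → ℂ) :=
  ⨅ X ∈ {X : Matrix (Fin 3) (Fin 3) ℂ | Matrix.trace X = 0}, LinearMap.ker (actL S X)

theorem finrank_eq_finrank_inf_ker_add_finrank_map {K V V' : Type*} [DivisionRing K]
    [AddCommGroup V] [Module K V] [AddCommGroup V'] [Module K V'] (p : Submodule K V)
    [FiniteDimensional K p] (f : V →ₗ[K] V') :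
    Module.finrank K p = Module.finrank K ↥(p ⊓ f.ker) + Module.finrank K (p.map f) := by
  rw [← (f.domRestrict p).finrank_range_add_finrank_ker, LinearMap.range_domRestrict,
    LinearMap.ker_domRestrict, add_comm, ← Submodule.map_comap_subtype,
    Submodule.finrank_map_subtype_eq]

/-! ### Highest weight vectors for type `A₂` -/

/-- Two `𝔰𝔩₂`-triples in a Lie ring that interact as the simple root vectors and coroots of `𝔰𝔩₃`.
The Serre relations and `⁅h₁, h₂⁆ = 0` are not part of the structure. -/
structure Sl3Triples (L : Type*) [LieRing L] where
  (h₁ e₁ f₁ h₂ e₂ f₂ : L)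
  isSl2Triple₁ : IsSl2Triple h₁ e₁ f₁
  isSl2Triple₂ : IsSl2Triple h₂ e₂ f₂
  lie_h₁_e₂ : ⁅h₁, e₂⁆ = -e₂
  lie_h₂_e₁ : ⁅h₂, e₁⁆ = -e₁
  lie_h₁_f₂ : ⁅h₁, f₂⁆ = f₂
  lie_h₂_f₁ : ⁅h₂, f₁⁆ = f₁
  lie_e₁_f₂ : ⁅e₁, f₂⁆ = 0
  lie_e₂_f₁ : ⁅e₂, f₁⁆ = 0

namespace Sl3Triples

/-- The diagram automorphism, exchanging the two simple roots. -/
def swap {L : Type*} [LieRing L] (g : Sl3Triples L) : Sl3Triples L where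
  h₁ := g.h₂
  e₁ := g.e₂
  f₁ := g.f₂
  h₂ := g.h₁
  e₂ := g.e₁
  f₂ := g.f₁
  isSl2Triple₁ := g.isSl2Triple₂
  isSl2Triple₂ := g.isSl2Triple₁
  lie_h₁_e₂ := g.lie_h₂_e₁
  lie_h₂_e₁ := g.lie_h₁_e₂
  lie_h₁_f₂ := g.lie_h₂_f₁
  lie_h₂_f₁ := g.lie_h₁_f₂
  lie_e₁_f₂ := g.lie_e₂_f₁
  lie_e₂_f₁ := g.lie_e₁_f₂

variable {𝕜 L V : Type*} [Field 𝕜] [LieRing L] [LieAlgebra 𝕜 L]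
  [AddCommGroup V] [Module 𝕜 V] [LieRingModule L V] [LieModule 𝕜 L V]
  (g : Sl3Triples L) {a b : 𝕜} {x : V}

section WeightSpace

variable (V) in
/-- The simultaneous eigenspace of `h₁` and `h₂` with eigenvalues `a` and `b`. -/
def weightSpace (a b : 𝕜) : Submodule 𝕜 V :=
  (LieModule.toEnd 𝕜 L V g.h₁).eigenspace a ⊓ (LieModule.toEnd 𝕜 L V g.h₂).eigenspace b

theorem mem_weightSpace : x ∈ g.weightSpace V a b ↔ ⁅g.h₁, x⁆ = a • x ∧ ⁅g.h₂, x⁆ = b • x := by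
  simp [weightSpace]

theorem swap_weightSpace : g.swap.weightSpace V b a = g.weightSpace V a b :=
  inf_comm _ _

theorem lie_mem_weightSpace {y : L} {c d : 𝕜} (hc : ⁅g.h₁, y⁆ = c • y) (hd : ⁅g.h₂, y⁆ = d • y)
    (hx : x ∈ g.weightSpace V a b) : ⁅y, x⁆ ∈ g.weightSpace V (a + c) (b + d) := by
  obtain ⟨ha, hb⟩ := g.mem_weightSpace.1 hx
  refine g.mem_weightSpace.2 ⟨?_, ?_⟩
  · rw [leibniz_lie, hc, ha, smul_lie, lie_smul, ← add_smul, add_comm]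
  · rw [leibniz_lie, hd, hb, smul_lie, lie_smul, ← add_smul, add_comm]

theorem lie_f₁_mem_weightSpace (hx : x ∈ g.weightSpace V a b) :
    ⁅g.f₁, x⁆ ∈ g.weightSpace V (a - 2) (b + 1) :=
  sub_eq_add_neg a 2 ▸ g.lie_mem_weightSpace
    (by rw [g.isSl2Triple₁.lie_lie_smul_f 𝕜, neg_smul]) (by rw [g.lie_h₂_f₁, one_smul]) hx

theorem lie_f₂_mem_weightSpace (hx : x ∈ g.weightSpace V a b) :
    ⁅g.f₂, x⁆ ∈ g.weightSpace V (a + 1) (b - 2) := by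
  rw [← swap_weightSpace] at hx ⊢
  exact g.swap.lie_f₁_mem_weightSpace hx

end WeightSpace

section HighestWeight

variable (V) in
/-- The space of highest weight vectors of weight `(a, b)`, including `0`. -/
def highestWeightSpace (a b : 𝕜) : Submodule 𝕜 V :=
  g.weightSpace V a b ⊓ (LieModule.toEnd 𝕜 L V g.e₁).ker ⊓ (LieModule.toEnd 𝕜 L V g.e₂).ker

theorem mem_highestWeightSpace : x ∈ g.highestWeightSpace V a b ↔
    x ∈ g.weightSpace V a b ∧ ⁅g.e₁, x⁆ = 0 ∧ ⁅g.e₂, x⁆ = 0 := by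
  simp [highestWeightSpace, and_assoc]

theorem swap_highestWeightSpace :
    g.swap.highestWeightSpace V b a = g.highestWeightSpace V a b := by
  ext x
  rw [mem_highestWeightSpace, mem_highestWeightSpace, swap_weightSpace]
  exact and_congr_right fun _ => and_comm

variable (V) in
/-- The dimension of the space of highest weight vectors of weight `(a, b)`; this is the
multiplicity of the corresponding irreducible module when `V` is semisimple. -/
def multiplicity (a b : 𝕜) : ℕ :=
  Module.finrank 𝕜 (g.highestWeightSpace V a b)

theorem swap_multiplicity : g.swap.multiplicity V b a = g.multiplicity V a b := by
  rw [multiplicity, swap_highestWeightSpace, multiplicity]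

theorem hasPrimitiveVectorWith_of_mem_highestWeightSpace (hx : x ∈ g.highestWeightSpace V a b)
    (hx₀ : x ≠ 0) : g.isSl2Triple₁.HasPrimitiveVectorWith x a := by
  obtain ⟨hw, he₁, -⟩ := g.mem_highestWeightSpace.1 hx
  exact ⟨hx₀, (g.mem_weightSpace.1 hw).1, he₁⟩

variable [CharZero 𝕜] [FiniteDimensional 𝕜 V]

theorem highestWeightSpace_eq_bot_of_fst_neg {m : ℤ} (hm : m < 0) (b : 𝕜) :
    g.highestWeightSpace V (m : 𝕜) b = ⊥ := by
  refine (Submodule.eq_bot_iff _).2 fun x hx => by_contra fun hx₀ => ?_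
  obtain ⟨n, hn⟩ := (g.hasPrimitiveVectorWith_of_mem_highestWeightSpace hx hx₀).exists_nat
  have : m = n := by exact_mod_cast hn
  lia

theorem highestWeightSpace_eq_bot_of_snd_neg (a : 𝕜) {m : ℤ} (hm : m < 0) :
    g.highestWeightSpace V a (m : 𝕜) = ⊥ := by
  rw [← swap_highestWeightSpace, g.swap.highestWeightSpace_eq_bot_of_fst_neg hm]

theorem lie_f₁_eq_zero_of_mem_highestWeightSpace (hx : x ∈ g.highestWeightSpace V 0 b) :
    ⁅g.f₁, x⁆ = 0 := by
  by_cases hx₀ : x = 0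
  · rw [hx₀, lie_zero]
  · simpa using (g.hasPrimitiveVectorWith_of_mem_highestWeightSpace hx hx₀)
      |>.pow_toEnd_f_eq_zero_of_eq_nat (n := 0) Nat.cast_zero.symm

theorem lie_f₂_eq_zero_of_mem_highestWeightSpace (hx : x ∈ g.highestWeightSpace V a 0) :
    ⁅g.f₂, x⁆ = 0 := by
  rw [← swap_highestWeightSpace] at hx
  exact g.swap.lie_f₁_eq_zero_of_mem_highestWeightSpace hx

end HighestWeight

/-! ### The Pieri rule -/

section Pieri

theorem lie_e₁_lie_f₁ (x : V) : ⁅g.e₁, ⁅g.f₁, x⁆⁆ = ⁅g.h₁, x⁆ + ⁅g.f₁, ⁅g.e₁, x⁆⁆ := by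
  rw [leibniz_lie, g.isSl2Triple₁.lie_e_f]

theorem lie_e₂_lie_f₂ (x : V) : ⁅g.e₂, ⁅g.f₂, x⁆⁆ = ⁅g.h₂, x⁆ + ⁅g.f₂, ⁅g.e₂, x⁆⁆ :=
  g.swap.lie_e₁_lie_f₁ x

theorem lie_e₁_lie_f₂ (x : V) : ⁅g.e₁, ⁅g.f₂, x⁆⁆ = ⁅g.f₂, ⁅g.e₁, x⁆⁆ := by
  rw [leibniz_lie, g.lie_e₁_f₂, zero_lie, zero_add]

theorem lie_e₂_lie_f₁ (x : V) : ⁅g.e₂, ⁅g.f₁, x⁆⁆ = ⁅g.f₁, ⁅g.e₂, x⁆⁆ :=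
  g.swap.lie_e₁_lie_f₂ x

variable (V) in
/-- The middle components, of weight `(a + 1, b - 1)`, of the highest weight vectors of weight
`(a, b)` in `W ⊗ V`, where `W` is the first fundamental representation. -/
def middleSpace (a b : 𝕜) : Submodule 𝕜 V :=
  g.weightSpace V (a + 1) (b - 1) ⊓ (LieModule.toEnd 𝕜 L V g.e₁).ker ⊓
    (g.highestWeightSpace V a (b + 1)).comap (LieModule.toEnd 𝕜 L V g.e₂)

theorem mem_middleSpace : x ∈ g.middleSpace V a b ↔ x ∈ g.weightSpace V (a + 1) (b - 1) ∧
    ⁅g.e₁, x⁆ = 0 ∧ ⁅g.e₂, x⁆ ∈ g.highestWeightSpace V a (b + 1) := by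
  simp [middleSpace, and_assoc]

variable (V) in
/-- The leading components, of weight `(a - 1, b)`, of the highest weight vectors of weight
`(a, b)` in `W ⊗ V`, where `W` is the first fundamental representation: the components along the
highest weight vector of `W`. -/
def leadingSpace (a b : 𝕜) : Submodule 𝕜 V :=
  g.weightSpace V (a - 1) b ⊓ (LieModule.toEnd 𝕜 L V g.e₂).ker ⊓
    (g.middleSpace V a b).comap (LieModule.toEnd 𝕜 L V g.e₁)

theorem mem_leadingSpace : x ∈ g.leadingSpace V a b ↔ x ∈ g.weightSpace V (a - 1) b ∧
    ⁅g.e₂, x⁆ = 0 ∧ ⁅g.e₁, x⁆ ∈ g.middleSpace V a b := by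
  simp [leadingSpace, and_assoc]

theorem middleSpace_inf_ker : g.middleSpace V a b ⊓ (LieModule.toEnd 𝕜 L V g.e₂).ker =
    g.highestWeightSpace V (a + 1) (b - 1) := by
  ext x
  simp only [Submodule.mem_inf, mem_middleSpace, mem_highestWeightSpace, LinearMap.mem_ker,
    LieModule.toEnd_apply_apply]
  exact ⟨fun ⟨⟨hw, h₁, _⟩, h₂⟩ => ⟨hw, h₁, h₂⟩,
    fun ⟨hw, h₁, h₂⟩ => ⟨⟨hw, h₁, by simp [h₂]⟩, h₂⟩⟩

theorem leadingSpace_inf_ker : g.leadingSpace V a b ⊓ (LieModule.toEnd 𝕜 L V g.e₁).ker =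
    g.highestWeightSpace V (a - 1) b := by
  ext x
  simp only [Submodule.mem_inf, mem_leadingSpace, mem_highestWeightSpace, LinearMap.mem_ker,
    LieModule.toEnd_apply_apply]
  exact ⟨fun ⟨⟨hw, h₂, _⟩, h₁⟩ => ⟨hw, h₁, h₂⟩,
    fun ⟨hw, h₁, h₂⟩ => ⟨⟨hw, h₂, by simp [h₁]⟩, h₁⟩⟩

theorem lie_e₂_lie_f₂_of_mem_highestWeightSpace (hx : x ∈ g.highestWeightSpace V a b) :
    ⁅g.e₂, ⁅g.f₂, x⁆⁆ = b • x := by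
  obtain ⟨hw, -, h₂⟩ := g.mem_highestWeightSpace.1 hx
  rw [lie_e₂_lie_f₂, h₂, lie_zero, add_zero, (g.mem_weightSpace.1 hw).2]

theorem lie_e₁_lie_f₁_of_mem_highestWeightSpace (hx : x ∈ g.highestWeightSpace V a b) :
    ⁅g.e₁, ⁅g.f₁, x⁆⁆ = a • x := by
  rw [← swap_highestWeightSpace] at hx
  exact g.swap.lie_e₂_lie_f₂_of_mem_highestWeightSpace hx

theorem lie_f₂_mem_middleSpace (hx : x ∈ g.highestWeightSpace V a (b + 1)) :
    ⁅g.f₂, x⁆ ∈ g.middleSpace V a b := by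
  obtain ⟨hw, h₁, -⟩ := g.mem_highestWeightSpace.1 hx
  refine g.mem_middleSpace.2 ⟨?_, ?_, ?_⟩
  · convert g.lie_f₂_mem_weightSpace hw using 2
    ring
  · rw [lie_e₁_lie_f₂, h₁, lie_zero]
  · rw [g.lie_e₂_lie_f₂_of_mem_highestWeightSpace hx]
    exact Submodule.smul_mem _ _ hx

theorem map_lie_e₂_middleSpace (hb : b + 1 ≠ 0) :
    (g.middleSpace V a b).map (LieModule.toEnd 𝕜 L V g.e₂ : V →ₗ[𝕜] V) =
      g.highestWeightSpace V a (b + 1) := by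
  refine le_antisymm (Submodule.map_le_iff_le_comap.2 inf_le_right) fun x hx => ?_
  refine ⟨(b + 1)⁻¹ • ⁅g.f₂, x⁆, Submodule.smul_mem _ _ (g.lie_f₂_mem_middleSpace hx), ?_⟩
  rw [LieModule.toEnd_apply_apply, lie_smul, g.lie_e₂_lie_f₂_of_mem_highestWeightSpace hx,
    inv_smul_smul₀ hb]

theorem lie_f₁_mem_leadingSpace (hx : x ∈ g.highestWeightSpace V (a + 1) (b - 1)) :
    ⁅g.f₁, x⁆ ∈ g.leadingSpace V a b := by
  obtain ⟨hw, -, h₂⟩ := g.mem_highestWeightSpace.1 hx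
  refine g.mem_leadingSpace.2 ⟨?_, ?_, ?_⟩
  · convert g.lie_f₁_mem_weightSpace hw using 2 <;> ring
  · rw [lie_e₂_lie_f₁, h₂, lie_zero]
  · rw [g.lie_e₁_lie_f₁_of_mem_highestWeightSpace hx]
    rw [← middleSpace_inf_ker] at hx
    exact Submodule.smul_mem _ _ hx.1

/-- The lowering operator along the non-simple root, normalised so that `e₂` kills its values on
highest weight vectors of weight `(a, b + 1)`. -/
def lower (b : 𝕜) (x : V) : V :=
  (b + 2) • ⁅g.f₁, ⁅g.f₂, x⁆⁆ - (b + 1) • ⁅g.f₂, ⁅g.f₁, x⁆⁆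

theorem lie_e₁_lower (hx : x ∈ g.highestWeightSpace V a (b + 1)) :
    ⁅g.e₁, g.lower b x⁆ = (a + b + 2) • ⁅g.f₂, x⁆ := by
  obtain ⟨hw, h₁, -⟩ := g.mem_highestWeightSpace.1 hx
  rw [lower, lie_sub, lie_smul, lie_smul, lie_e₁_lie_f₁, lie_e₁_lie_f₂, lie_e₁_lie_f₂, h₁,
    g.lie_e₁_lie_f₁_of_mem_highestWeightSpace hx,
    (g.mem_weightSpace.1 (g.lie_f₂_mem_weightSpace hw)).1, lie_smul, lie_zero, lie_zero]
  module

theorem lie_e₂_lower (hx : x ∈ g.highestWeightSpace V a (b + 1)) : ⁅g.e₂, g.lower b x⁆ = 0 := by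
  obtain ⟨hw, -, h₂⟩ := g.mem_highestWeightSpace.1 hx
  rw [lower, lie_sub, lie_smul, lie_smul, lie_e₂_lie_f₁, lie_e₂_lie_f₂ g ⁅g.f₁, x⁆, lie_e₂_lie_f₁,
    h₂, g.lie_e₂_lie_f₂_of_mem_highestWeightSpace hx,
    (g.mem_weightSpace.1 (g.lie_f₁_mem_weightSpace hw)).2, lie_smul, lie_zero, lie_zero]
  module

theorem lower_mem_weightSpace (hx : x ∈ g.weightSpace V a (b + 1)) :
    g.lower b x ∈ g.weightSpace V (a - 1) b := by
  refine Submodule.sub_mem _ (Submodule.smul_mem _ _ ?_) (Submodule.smul_mem _ _ ?_)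
  · convert g.lie_f₁_mem_weightSpace (g.lie_f₂_mem_weightSpace hx) using 2 <;> ring
  · convert g.lie_f₂_mem_weightSpace (g.lie_f₁_mem_weightSpace hx) using 2 <;> ring

theorem lower_mem_leadingSpace (hx : x ∈ g.highestWeightSpace V a (b + 1)) :
    g.lower b x ∈ g.leadingSpace V a b := by
  refine g.mem_leadingSpace.2
    ⟨g.lower_mem_weightSpace (g.mem_highestWeightSpace.1 hx).1, g.lie_e₂_lower hx, ?_⟩
  rw [g.lie_e₁_lower hx]
  exact Submodule.smul_mem _ _ (g.lie_f₂_mem_middleSpace hx)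

theorem map_lie_e₁_leadingSpace (ha : a + 1 ≠ 0) (hb : b + 1 ≠ 0) (hab : a + b + 2 ≠ 0) :
    (g.leadingSpace V a b).map (LieModule.toEnd 𝕜 L V g.e₁ : V →ₗ[𝕜] V) =
      g.middleSpace V a b := by
  refine le_antisymm (Submodule.map_le_iff_le_comap.2 inf_le_right) fun y hy => ?_
  set t : V := ⁅g.e₂, y⁆
  have ht : t ∈ g.highestWeightSpace V a (b + 1) := (g.mem_middleSpace.1 hy).2.2
  set w : V := y - (b + 1)⁻¹ • ⁅g.f₂, t⁆
  have hw : w ∈ g.highestWeightSpace V (a + 1) (b - 1) := by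
    rw [← middleSpace_inf_ker]
    refine Submodule.mem_inf.2
      ⟨sub_mem hy (Submodule.smul_mem _ _ (g.lie_f₂_mem_middleSpace ht)), ?_⟩
    rw [LinearMap.mem_ker, LieModule.toEnd_apply_apply, lie_sub, lie_smul,
      g.lie_e₂_lie_f₂_of_mem_highestWeightSpace ht, inv_smul_smul₀ hb, sub_self]
  refine ⟨(a + 1)⁻¹ • ⁅g.f₁, w⁆ + ((b + 1)⁻¹ * (a + b + 2)⁻¹) • g.lower b t,
    add_mem (Submodule.smul_mem _ _ (g.lie_f₁_mem_leadingSpace hw))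
      (Submodule.smul_mem _ _ (g.lower_mem_leadingSpace ht)), ?_⟩
  rw [LieModule.toEnd_apply_apply, lie_add, lie_smul, lie_smul,
    g.lie_e₁_lie_f₁_of_mem_highestWeightSpace hw, g.lie_e₁_lower ht, inv_smul_smul₀ ha, mul_smul,
    inv_smul_smul₀ hab, sub_add_cancel]

theorem finrank_leadingSpace [FiniteDimensional 𝕜 V] (ha : a + 1 ≠ 0) (hb : b + 1 ≠ 0)
    (hab : a + b + 2 ≠ 0) :
    Module.finrank 𝕜 (g.leadingSpace V a b) = g.multiplicity V (a - 1) b +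
      (g.multiplicity V (a + 1) (b - 1) + g.multiplicity V a (b + 1)) := by
  rw [finrank_eq_finrank_inf_ker_add_finrank_map _ (LieModule.toEnd 𝕜 L V g.e₁),
    leadingSpace_inf_ker, g.map_lie_e₁_leadingSpace ha hb hab,
    finrank_eq_finrank_inf_ker_add_finrank_map (g.middleSpace V a b) (LieModule.toEnd 𝕜 L V g.e₂),
    middleSpace_inf_ker, g.map_lie_e₂_middleSpace hb, multiplicity, multiplicity, multiplicity]

end Pieri

section FundamentalTensor

variable {M : Type*} [AddCommGroup M] [Module 𝕜 M] [LieRingModule L M] [LieModule 𝕜 L M]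

/-- `φ` identifies `M` with `W ⊗ V`, where `W` is the first fundamental representation with a basis
`w₀, w₁, w₂` of weight vectors of weights `(1, 0)`, `(-1, 1)` and `(0, -1)` such that `e₁` maps `w₁`
to `c • w₀` and `e₂` maps `w₂` to `c • w₁`; the coordinates of `φ x` are the components of `x`
along `w₀`, `w₁` and `w₂`. -/
structure IsFundamentalTensor (φ : M ≃ₗ[𝕜] Fin 3 → V) (c : 𝕜) : Prop where
  apply_lie_h₁ (x : M) :
    φ ⁅g.h₁, x⁆ = ![⁅g.h₁, φ x 0⁆ + φ x 0, ⁅g.h₁, φ x 1⁆ - φ x 1, ⁅g.h₁, φ x 2⁆]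
  apply_lie_h₂ (x : M) :
    φ ⁅g.h₂, x⁆ = ![⁅g.h₂, φ x 0⁆, ⁅g.h₂, φ x 1⁆ + φ x 1, ⁅g.h₂, φ x 2⁆ - φ x 2]
  apply_lie_e₁ (x : M) :
    φ ⁅g.e₁, x⁆ = ![⁅g.e₁, φ x 0⁆ + c • φ x 1, ⁅g.e₁, φ x 1⁆, ⁅g.e₁, φ x 2⁆]
  apply_lie_e₂ (x : M) :
    φ ⁅g.e₂, x⁆ = ![⁅g.e₂, φ x 0⁆, ⁅g.e₂, φ x 1⁆ + c • φ x 2, ⁅g.e₂, φ x 2⁆]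

namespace IsFundamentalTensor

variable {g} {φ : M ≃ₗ[𝕜] Fin 3 → V} {c : 𝕜} {x : M}

theorem mem_weightSpace_iff (h : g.IsFundamentalTensor φ c) : x ∈ g.weightSpace M a b ↔
    φ x 0 ∈ g.weightSpace V (a - 1) b ∧ φ x 1 ∈ g.weightSpace V (a + 1) (b - 1) ∧
      φ x 2 ∈ g.weightSpace V a (b + 1) := by
  simp only [mem_weightSpace, ← φ.injective.eq_iff, h.apply_lie_h₁, h.apply_lie_h₂, map_smul,
    funext_iff, Fin.forall_fin_succ, Pi.smul_apply, sub_smul, add_smul, one_smul,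
    eq_sub_iff_add_eq, ← sub_eq_iff_eq_add]
  simp only [Fin.succ_zero_eq_one, Fin.succ_one_eq_two, Matrix.cons_val_zero, Matrix.cons_val_one,
    Matrix.cons_val, IsEmpty.forall_iff, and_true]
  tauto

omit [LieAlgebra 𝕜 L] [LieModule 𝕜 L V] [LieModule 𝕜 L M] in
theorem lie_e₁_eq_zero_iff (h : g.IsFundamentalTensor φ c) (hc : c ≠ 0) : ⁅g.e₁, x⁆ = 0 ↔
    φ x 1 = -c⁻¹ • ⁅g.e₁, φ x 0⁆ ∧ ⁅g.e₁, φ x 1⁆ = 0 ∧ ⁅g.e₁, φ x 2⁆ = 0 := by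
  rw [← φ.map_eq_zero_iff, h.apply_lie_e₁, neg_smul, ← smul_neg, eq_inv_smul_iff₀ hc,
    eq_neg_iff_add_eq_zero, add_comm]
  simp [funext_iff, Fin.forall_fin_succ]

omit [LieAlgebra 𝕜 L] [LieModule 𝕜 L V] [LieModule 𝕜 L M] in
theorem lie_e₂_eq_zero_iff (h : g.IsFundamentalTensor φ c) (hc : c ≠ 0) : ⁅g.e₂, x⁆ = 0 ↔
    φ x 2 = -c⁻¹ • ⁅g.e₂, φ x 1⁆ ∧ ⁅g.e₂, φ x 0⁆ = 0 ∧ ⁅g.e₂, φ x 2⁆ = 0 := by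
  rw [← φ.map_eq_zero_iff, h.apply_lie_e₂, neg_smul, ← smul_neg, eq_inv_smul_iff₀ hc,
    eq_neg_iff_add_eq_zero, add_comm (c • φ x 2), and_left_comm]
  simp [funext_iff, Fin.forall_fin_succ]

theorem mem_highestWeightSpace_iff (h : g.IsFundamentalTensor φ c) (hc : c ≠ 0) :
    x ∈ g.highestWeightSpace M a b ↔ φ x 0 ∈ g.leadingSpace V a b ∧
      φ x 1 = -c⁻¹ • ⁅g.e₁, φ x 0⁆ ∧ φ x 2 = -c⁻¹ • ⁅g.e₂, φ x 1⁆ := by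
  have hc' : -c⁻¹ ≠ 0 := neg_ne_zero.2 (inv_ne_zero hc)
  rw [mem_highestWeightSpace, h.mem_weightSpace_iff, h.lie_e₁_eq_zero_iff hc,
    h.lie_e₂_eq_zero_iff hc, mem_leadingSpace]
  have key (h₁ : φ x 1 = -c⁻¹ • ⁅g.e₁, φ x 0⁆) (h₂ : φ x 2 = -c⁻¹ • ⁅g.e₂, φ x 1⁆) :
      ⁅g.e₁, φ x 0⁆ ∈ g.middleSpace V a b ↔ φ x 1 ∈ g.weightSpace V (a + 1) (b - 1) ∧
        ⁅g.e₁, φ x 1⁆ = 0 ∧ φ x 2 ∈ g.weightSpace V a (b + 1) ∧ ⁅g.e₁, φ x 2⁆ = 0 ∧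
          ⁅g.e₂, φ x 2⁆ = 0 := by
    rw [← mem_highestWeightSpace, h₂, Submodule.smul_mem_iff _ hc', ← mem_middleSpace, h₁,
      Submodule.smul_mem_iff _ hc']
  tauto

theorem multiplicity_eq_finrank_leadingSpace (h : g.IsFundamentalTensor φ c)
    (hc : c ≠ 0) (a b : 𝕜) : g.multiplicity M a b = Module.finrank 𝕜 (g.leadingSpace V a b) := by
  refine (LinearEquiv.ofBijective (((LinearMap.proj 0).comp φ.toLinearMap).restrict
    fun x hx => ((h.mem_highestWeightSpace_iff hc).1 hx).1) ⟨?_, ?_⟩).finrank_eq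
  · rw [← LinearMap.ker_eq_bot, LinearMap.ker_eq_bot']
    rintro ⟨x, hx⟩ hx₀
    obtain ⟨-, h₁, h₂⟩ := (h.mem_highestWeightSpace_iff hc).1 hx
    replace hx₀ : φ x 0 = 0 := congrArg Subtype.val hx₀
    have hx₁ : φ x 1 = 0 := by rw [h₁, hx₀, lie_zero, smul_zero]
    have hx₂ : φ x 2 = 0 := by rw [h₂, hx₁, lie_zero, smul_zero]
    refine Subtype.ext (φ.map_eq_zero_iff.1 (funext fun i => ?_))
    fin_cases i
    exacts [hx₀, hx₁, hx₂]
  · rintro ⟨p, hp⟩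
    let q : V := -c⁻¹ • ⁅g.e₁, p⁆
    have hx : φ (φ.symm ![p, q, -c⁻¹ • ⁅g.e₂, q⁆]) = ![p, q, -c⁻¹ • ⁅g.e₂, q⁆] :=
      φ.apply_symm_apply _
    refine ⟨⟨φ.symm ![p, q, -c⁻¹ • ⁅g.e₂, q⁆], (h.mem_highestWeightSpace_iff hc).2 ?_⟩,
      Subtype.ext (congrFun hx 0)⟩
    rw [hx]
    exact ⟨hp, rfl, rfl⟩

theorem multiplicity_eq [FiniteDimensional 𝕜 V] (h : g.IsFundamentalTensor φ c) (hc : c ≠ 0)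
    (ha : a + 1 ≠ 0) (hb : b + 1 ≠ 0) (hab : a + b + 2 ≠ 0) :
    g.multiplicity M a b = g.multiplicity V (a - 1) b +
      (g.multiplicity V (a + 1) (b - 1) + g.multiplicity V a (b + 1)) := by
  rw [h.multiplicity_eq_finrank_leadingSpace hc, g.finrank_leadingSpace ha hb hab]

end IsFundamentalTensor

end FundamentalTensor

end Sl3Triples

/-! ### The tensor product as a Lie module -/

section TensorSpace

attribute [local instance] LieRing.ofAssociativeRing

/-- The coordinate space of `W^S`. -/
abbrev TensorSpace (S : List Bool) : Type := (Fin S.length → Fin 3) → ℂ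

/-- The action of a matrix on a single factor: `W⁺` for `true` and its dual `W⁻` for `false`. -/
def factorMatrix (s : Bool) : Matrix (Fin 3) (Fin 3) ℂ →ₗ[ℂ] Matrix (Fin 3) (Fin 3) ℂ :=
  if s then LinearMap.id else -(Matrix.transposeLinearEquiv (Fin 3) (Fin 3) ℂ ℂ).toLinearMap

/-- The identification of `W^s ⊗ W^S` with triples of elements of `W^S`, the components along the
standard basis vectors of `W^s`. -/
def consEquiv (s : Bool) (S : List Bool) : TensorSpace (s :: S) ≃ₗ[ℂ] (Fin 3 → TensorSpace S) :=
  LinearEquiv.funCongrLeft ℂ ℂ (Fin.consEquiv fun _ : Fin (S.length + 1) => Fin 3) ≪≫ₗ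
    LinearEquiv.curry ℂ ℂ (Fin 3) (Fin S.length → Fin 3)

variable (s : Bool) (S : List Bool) (X Y : Matrix (Fin 3) (Fin 3) ℂ)

theorem factorMatrix_lie : factorMatrix s ⁅X, Y⁆ = ⁅factorMatrix s X, factorMatrix s Y⁆ := by
  cases s <;> simp [factorMatrix, Ring.lie_def]

theorem consEquiv_apply (x : TensorSpace (s :: S)) (i : Fin 3) (k : Fin S.length → Fin 3) :
    consEquiv s S x i k = x (Fin.cons (n := S.length) (α := fun _ => Fin 3) i k) :=
  rfl

theorem consEquiv_actL (x : TensorSpace (s :: S)) (i : Fin 3) :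
    consEquiv s S (actL (s :: S) X x) i =
      ∑ j, factorMatrix s X i j • consEquiv s S x j + actL S X (consEquiv s S x i) := by
  funext k
  change ∑ l : Fin (S.length + 1), ∑ j : Fin 3, coefM (s :: S) X l
      (Fin.cons (n := S.length) (α := fun _ => Fin 3) i k l) j *
        x (Function.update (Fin.cons (n := S.length) (α := fun _ => Fin 3) i k) l j) = _
  rw [Fin.sum_univ_succ]
  simp only [Fin.cons_zero, Fin.cons_succ, Fin.update_cons_zero, ← Fin.cons_update]
  cases s <;> simp [Finset.sum_apply, consEquiv_apply, actL, coefM, factorMatrix]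

theorem actL_nil (x : TensorSpace []) : actL [] X x = 0 := by
  funext k
  simp only [actL, LinearMap.coe_mk, AddHom.coe_mk]
  exact Fin.sum_univ_zero _

theorem actL_add (x : TensorSpace S) : actL S (X + Y) x = actL S X x + actL S Y x := by
  induction S with
  | nil => simp only [actL_nil, add_zero]
  | cons s S ih =>
    refine (consEquiv s S).injective (funext fun i => ?_)
    simp only [map_add, Pi.add_apply, consEquiv_actL, ih, Matrix.add_apply, add_smul,
      Finset.sum_add_distrib]
    abel

theorem actL_smul (t : ℂ) (x : TensorSpace S) : actL S (t • X) x = t • actL S X x := by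
  induction S with
  | nil => simp only [actL_nil, smul_zero]
  | cons s S ih =>
    refine (consEquiv s S).injective (funext fun i => ?_)
    simp only [map_smul, Pi.smul_apply, consEquiv_actL, ih, Matrix.smul_apply, smul_add,
      Finset.smul_sum, smul_assoc]

theorem actL_lie (x : TensorSpace S) :
    actL S ⁅X, Y⁆ x = actL S X (actL S Y x) - actL S Y (actL S X x) := by
  induction S with
  | nil => simp only [actL_nil, sub_zero]
  | cons s S ih =>
    refine (consEquiv s S).injective (funext fun i => ?_)
    simp only [map_sub, Pi.sub_apply, consEquiv_actL, ih, factorMatrix_lie]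
    simp only [Ring.lie_def, Matrix.sub_apply, Matrix.mul_apply, map_add, map_smul,
      Fin.sum_univ_three]
    module

instance : LieRingModule (Matrix (Fin 3) (Fin 3) ℂ) (TensorSpace S) where
  bracket X x := actL S X x
  add_lie := actL_add S
  lie_add X := map_add (actL S X)
  leibniz_lie X Y x := sub_eq_iff_eq_add.1 (actL_lie S X Y x).symm

theorem lie_tensorSpace_def (x : TensorSpace S) : ⁅X, x⁆ = actL S X x :=
  rfl

instance : LieModule ℂ (Matrix (Fin 3) (Fin 3) ℂ) (TensorSpace S) where
  smul_lie t X := actL_smul S X t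
  lie_smul t X := map_smul (actL S X) t

/-- Chevalley generators of `𝔰𝔩₃`, twisted by the Chevalley involution: a highest weight vector of
weight `(a, b)` for `twistedGenerators` is a lowest weight vector of weight `(-a, -b)` in the usual
sense. -/
def twistedGenerators : Sl3Triples (Matrix (Fin 3) (Fin 3) ℂ) where
  h₁ := .diagonal ![-1, 1, 0]
  e₁ := .single 1 0 1
  f₁ := .single 0 1 1
  h₂ := .diagonal ![0, -1, 1]
  e₂ := .single 2 1 1
  f₂ := .single 1 2 1
  isSl2Triple₁ :=
    { h_ne_zero := fun h => by simpa using congrFun₂ h 1 1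
      lie_e_f := by ext i j; fin_cases i <;> fin_cases j <;> simp [Ring.lie_def]
      lie_h_e_nsmul := by
        ext i j; fin_cases i <;> fin_cases j <;> simp [Ring.lie_def, one_add_one_eq_two]
      lie_h_f_nsmul := by
        ext i j; fin_cases i <;> fin_cases j <;>
          simp [Ring.lie_def, neg_sub_left, one_add_one_eq_two] }
  isSl2Triple₂ :=
    { h_ne_zero := fun h => by simpa using congrFun₂ h 2 2
      lie_e_f := by ext i j; fin_cases i <;> fin_cases j <;> simp [Ring.lie_def]
      lie_h_e_nsmul := by
        ext i j; fin_cases i <;> fin_cases j <;> simp [Ring.lie_def, one_add_one_eq_two]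
      lie_h_f_nsmul := by
        ext i j; fin_cases i <;> fin_cases j <;>
          simp [Ring.lie_def, neg_sub_left, one_add_one_eq_two] }
  lie_h₁_e₂ := by ext i j; fin_cases i <;> fin_cases j <;> simp [Ring.lie_def]
  lie_h₂_e₁ := by ext i j; fin_cases i <;> fin_cases j <;> simp [Ring.lie_def]
  lie_h₁_f₂ := by ext i j; fin_cases i <;> fin_cases j <;> simp [Ring.lie_def]
  lie_h₂_f₁ := by ext i j; fin_cases i <;> fin_cases j <;> simp [Ring.lie_def]
  lie_e₁_f₂ := by ext i j; fin_cases i <;> fin_cases j <;> simp [Ring.lie_def]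
  lie_e₂_f₁ := by ext i j; fin_cases i <;> fin_cases j <;> simp [Ring.lie_def]

theorem consEquiv_lie (x : TensorSpace (s :: S)) (i : Fin 3) :
    consEquiv s S ⁅X, x⁆ i =
      ∑ j, factorMatrix s X i j • consEquiv s S x j + ⁅X, consEquiv s S x i⁆ :=
  consEquiv_actL s S X x i

theorem isFundamentalTensor_consEquiv_false :
    twistedGenerators.IsFundamentalTensor (consEquiv false S) (-1 : ℂ) := by
  constructor <;> intro x <;> ext i : 1 <;> fin_cases i <;>
    simp [consEquiv_lie, factorMatrix, twistedGenerators, Fin.sum_univ_three] <;> abel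

theorem isFundamentalTensor_consEquiv_true :
    twistedGenerators.swap.IsFundamentalTensor
      (consEquiv true S ≪≫ₗ LinearEquiv.funCongrLeft ℂ (TensorSpace S) Fin.revPerm) (1 : ℂ) := by
  constructor <;> intro x <;> ext i : 1 <;> fin_cases i <;>
    simp [consEquiv_lie, factorMatrix, twistedGenerators, Sl3Triples.swap, Fin.sum_univ_three] <;>
    abel

theorem mem_invSub {x : TensorSpace S} :
    x ∈ invSub S ↔ ∀ X : Matrix (Fin 3) (Fin 3) ℂ, X.trace = 0 → ⁅X, x⁆ = 0 := by
  simp [invSub, lie_tensorSpace_def]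

variable {X} in
theorem eq_sum_twistedGenerators_of_trace_eq_zero (hX : X.trace = 0) :
    X = X 1 0 • twistedGenerators.e₁ + X 2 1 • twistedGenerators.e₂ +
      X 0 1 • twistedGenerators.f₁ + X 1 2 • twistedGenerators.f₂ -
      X 0 0 • twistedGenerators.h₁ + X 2 2 • twistedGenerators.h₂ +
      X 2 0 • ⁅twistedGenerators.e₂, twistedGenerators.e₁⁆ +
      X 0 2 • ⁅twistedGenerators.f₁, twistedGenerators.f₂⁆ := by
  have h : X 1 1 = -X 0 0 - X 2 2 := by
    rw [Matrix.trace_fin_three] at hX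
    linear_combination hX
  ext i j
  fin_cases i <;> fin_cases j <;> simp [twistedGenerators, Ring.lie_def, h, sub_eq_add_neg]

theorem invSub_eq_highestWeightSpace :
    invSub S = twistedGenerators.highestWeightSpace (TensorSpace S) (0 : ℂ) 0 := by
  ext x
  rw [mem_invSub]
  refine ⟨fun h => ?_, fun hx X hX => ?_⟩
  · rw [Sl3Triples.mem_highestWeightSpace, Sl3Triples.mem_weightSpace, zero_smul]
    refine ⟨⟨h _ ?_, h _ ?_⟩, h _ ?_, h _ ?_⟩ <;>
      simp [twistedGenerators, Fin.sum_univ_three]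
  · have hf₁ := twistedGenerators.lie_f₁_eq_zero_of_mem_highestWeightSpace hx
    have hf₂ := twistedGenerators.lie_f₂_eq_zero_of_mem_highestWeightSpace hx
    obtain ⟨hw, he₁, he₂⟩ := twistedGenerators.mem_highestWeightSpace.1 hx
    obtain ⟨hh₁, hh₂⟩ := twistedGenerators.mem_weightSpace.1 hw
    rw [eq_sum_twistedGenerators_of_trace_eq_zero hX]
    simp only [add_lie, sub_lie, smul_lie, lie_lie, he₁, he₂, hf₁, hf₂, hh₁, hh₂, lie_zero,
      smul_zero, zero_smul, add_zero, sub_zero]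

/-- The multiplicity of the weight `p` among the highest weight vectors of `W^S`, for the twisted
generators. -/
def tensorMultiplicity (p : ℤ × ℤ) : ℕ :=
  twistedGenerators.multiplicity (TensorSpace S) (p.1 : ℂ) (p.2 : ℂ)

theorem finrank_invSub : Module.finrank ℂ (invSub S) = tensorMultiplicity S 0 := by
  rw [invSub_eq_highestWeightSpace, tensorMultiplicity, Prod.fst_zero, Prod.snd_zero, Int.cast_zero,
    Sl3Triples.multiplicity]

theorem tensorMultiplicity_nil_zero : tensorMultiplicity [] 0 = 1 := by
  have h : invSub [] = ⊤ :=
    eq_top_iff.2 fun x _ => (mem_invSub []).2 fun X _ => actL_nil X x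
  rw [← finrank_invSub, h, finrank_top, Module.finrank_fintype_fun_eq_card]
  simp

theorem tensorMultiplicity_nil_of_ne_zero {p : ℤ × ℤ} (hp : p ≠ 0) :
    tensorMultiplicity [] p = 0 := by
  refine (Submodule.finrank_eq_zero (R := ℂ)).2 ((Submodule.eq_bot_iff _).2 fun x hx => ?_)
  obtain ⟨h₁, h₂⟩ := twistedGenerators.mem_weightSpace.1
    (twistedGenerators.mem_highestWeightSpace.1 hx).1
  rw [lie_tensorSpace_def, actL_nil, eq_comm, smul_eq_zero, Int.cast_eq_zero] at h₁ h₂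
  by_contra hx₀
  exact hp (Prod.ext (h₁.resolve_right hx₀) (h₂.resolve_right hx₀))

theorem tensorMultiplicity_of_not_nonneg {p : ℤ × ℤ} (hp : ¬(0 ≤ p.1 ∧ 0 ≤ p.2)) :
    tensorMultiplicity S p = 0 := by
  rw [not_and_or, not_le, not_le] at hp
  refine (Submodule.finrank_eq_zero (R := ℂ)).2 ?_
  rcases hp with h | h
  · exact twistedGenerators.highestWeightSpace_eq_bot_of_fst_neg h _
  · exact twistedGenerators.highestWeightSpace_eq_bot_of_snd_neg _ h

theorem sum_univ_st {A : Type*} [AddCommMonoid A] (f : St → A) :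
    ∑ j, f j = f .neg + (f .zero + f .pos) := by
  change ∑ j ∈ {St.neg, St.zero, St.pos}, f j = _
  rw [Finset.sum_insert (by decide), Finset.sum_insert (by decide), Finset.sum_singleton]

theorem tensorMultiplicity_cons {p : ℤ × ℤ} (h₁ : 0 ≤ p.1) (h₂ : 0 ≤ p.2) :
    tensorMultiplicity (s :: S) p = ∑ j, tensorMultiplicity S (p + wt s j) := by
  have ha : (p.1 : ℂ) + 1 ≠ 0 := by exact_mod_cast (by lia : p.1 + 1 ≠ 0)
  have hb : (p.2 : ℂ) + 1 ≠ 0 := by exact_mod_cast (by lia : p.2 + 1 ≠ 0)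
  have hab : (p.1 : ℂ) + p.2 + 2 ≠ 0 := by exact_mod_cast (by lia : p.1 + p.2 + 2 ≠ 0)
  cases s with
  | false =>
    rw [tensorMultiplicity, (isFundamentalTensor_consEquiv_false S).multiplicity_eq
      (neg_ne_zero.2 one_ne_zero) ha hb hab, sum_univ_st]
    simp [tensorMultiplicity, wt, sub_eq_add_neg]
  | true =>
    rw [tensorMultiplicity, ← Sl3Triples.swap_multiplicity,
      (isFundamentalTensor_consEquiv_true S).multiplicity_eq one_ne_zero hb ha
        (by rwa [add_comm (p.2 : ℂ)]), sum_univ_st]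
    simp [tensorMultiplicity, wt, sub_eq_add_neg, Sl3Triples.swap_multiplicity]

end TensorSpace

/-! ### Counting dominant paths -/

section DominantPaths

/-- The variant of `Dominant` for paths that start at `p` instead of the origin. -/
def DominantFrom (p : ℤ × ℤ) (S : List Bool) (J : List St) : Prop :=
  J.length = S.length ∧
  (∀ k : ℕ, 0 ≤ (p + wtSum (S.take k) (J.take k)).1 ∧
    0 ≤ (p + wtSum (S.take k) (J.take k)).2) ∧
  p + wtSum S J = 0

variable {p : ℤ × ℤ} {s : Bool} {S : List Bool} {j : St} {J : List St}

theorem dominantFrom_zero : DominantFrom 0 S J ↔ Dominant S J := by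
  simp only [DominantFrom, Dominant, zero_add]

theorem wtSum_nil_left : wtSum [] J = 0 :=
  rfl

theorem wtSum_cons : wtSum (s :: S) (j :: J) = wt s j + wtSum S J := by
  simp [wtSum]

theorem DominantFrom.nonneg (h : DominantFrom p S J) : 0 ≤ p.1 ∧ 0 ≤ p.2 := by
  simpa [wtSum_nil_left] using h.2.1 0

theorem dominantFrom_nil : DominantFrom p [] J ↔ p = 0 ∧ J = [] := by
  refine ⟨fun h => ⟨by simpa [wtSum_nil_left] using h.2.2, List.length_eq_zero_iff.1 h.1⟩, ?_⟩
  rintro ⟨rfl, rfl⟩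
  simp [DominantFrom, wtSum_nil_left]

theorem dominantFrom_cons : DominantFrom p (s :: S) (j :: J) ↔
    (0 ≤ p.1 ∧ 0 ≤ p.2) ∧ DominantFrom (p + wt s j) S J := by
  have hk (k : ℕ) : p + wtSum ((s :: S).take (k + 1)) ((j :: J).take (k + 1)) =
      p + wt s j + wtSum (S.take k) (J.take k) := by
    rw [List.take_succ_cons, List.take_succ_cons, wtSum_cons, add_assoc]
  simp only [DominantFrom, wtSum_cons, ← add_assoc, List.length_cons, add_left_inj]
  rw [Nat.and_forall_add_one.symm]
  simp only [hk, List.take_zero, wtSum_nil_left, add_zero]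
  tauto

theorem finite_dominantFrom (p : ℤ × ℤ) (S : List Bool) :
    Finite {J : List St // DominantFrom p S J} :=
  (List.finite_length_eq St S.length).subset fun _ hJ => hJ.1

theorem card_dominantFrom_nil (p : ℤ × ℤ) :
    Nat.card {J : List St // DominantFrom p [] J} = if p = 0 then 1 else 0 := by
  split_ifs with hp <;> simp [dominantFrom_nil, hp]

/-- Splitting off the first step of a dominant path. -/
def dominantFromConsEquiv (hp : 0 ≤ p.1 ∧ 0 ≤ p.2) (s : Bool) (S : List Bool) :
    {J : List St // DominantFrom p (s :: S) J} ≃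
      Σ j : St, {J : List St // DominantFrom (p + wt s j) S J} where
  toFun
    | ⟨[], h⟩ => absurd h.1 (by simp)
    | ⟨j :: J, h⟩ => ⟨j, J, (dominantFrom_cons.1 h).2⟩
  invFun q := ⟨q.1 :: q.2.1, dominantFrom_cons.2 ⟨hp, q.2.2⟩⟩
  left_inv
    | ⟨[], h⟩ => absurd h.1 (by simp)
    | ⟨j :: J, h⟩ => rfl
  right_inv _ := rfl

theorem card_dominantFrom_cons (hp : 0 ≤ p.1 ∧ 0 ≤ p.2) (s : Bool) (S : List Bool) :
    Nat.card {J : List St // DominantFrom p (s :: S) J} =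
      ∑ j, Nat.card {J : List St // DominantFrom (p + wt s j) S J} := by
  have (j : St) := finite_dominantFrom (p + wt s j) S
  rw [Nat.card_congr (dominantFromConsEquiv hp s S), Nat.card_sigma]

theorem tensorMultiplicity_eq_card (S : List Bool) (p : ℤ × ℤ) :
    tensorMultiplicity S p = Nat.card {J : List St // DominantFrom p S J} := by
  induction S generalizing p with
  | nil =>
    rw [card_dominantFrom_nil]
    split_ifs with hp
    · rw [hp, tensorMultiplicity_nil_zero]
    · exact tensorMultiplicity_nil_of_ne_zero hp
  | cons s S ih =>
    by_cases hp : 0 ≤ p.1 ∧ 0 ≤ p.2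
    · rw [tensorMultiplicity_cons s S hp.1 hp.2, card_dominantFrom_cons hp]
      exact Finset.sum_congr rfl fun j _ => ih _
    · have : IsEmpty {J : List St // DominantFrom p (s :: S) J} := ⟨fun J => hp J.2.nonneg⟩
      rw [tensorMultiplicity_of_not_nonneg (s :: S) hp, Nat.card_of_isEmpty]

end DominantPaths

/-- the dimension of the invariant space equals the number of
dominant state strings. -/
theorem finrank_inv_eq_card_dominant (S : List Bool) :
    Module.finrank ℂ (invSub S) = Nat.card {J : List St // Dominant S J} := by
  simp only [finrank_invSub, tensorMultiplicity_eq_card, dominantFrom_zero]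

end
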